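/- arXiv:2503.01567 — 3 statements merged into one kernel-verified Lean document; each statement's English description precedes it below -/
import Mathlib

section
/- Let $\alpha > 0$, let $F : \mathbb{R} \to \mathbb{R}$ be an even Schwartz function with $F(t) \ne 0$ for all $t \in [-1, 1]$, and let $\sigma$ be a positive Borel measure on $(0, \infty)$ that is tempered, i.e. $\sigma((0, r])$ is finite for every $r > 0$ and there exist constants $C, N, M > 0$ with $\sigma((0, r]) \le C r^N$ for all $r \ge M$. Then $$\lim_{\varepsilon \to 0^+} \frac{\sigma((0, \varepsilon])}{\varepsilon^{\alpha}} = 0 \quad \Longleftrightarrow \quad \lim_{s \to +\infty} s^{\alpha} \int_{(0,\infty)} F(s\lambda)^2 \, d\sigma(\lambda) = 0.$$ -/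
open MeasureTheory Filter


lemma schwartz_dyadic (F : SchwartzMap ℝ ℝ) (p : ℕ) :
    ∃ K : ℝ, 0 < K ∧ ∀ t : ℝ, 0 < t → ∃ n : ℕ, t ≤ 2 ^ n ∧ (F t) ^ 2 ≤ K * ((1 / 2) ^ p) ^ n := by
  obtain ⟨A, hA, hA'⟩ := F.decay 0 0
  obtain ⟨B, hB, hB'⟩ := F.decay p 0
  simp only [pow_zero, one_mul, norm_iteratedFDeriv_zero, Real.norm_eq_abs] at hA' hB'
  refine ⟨A ^ 2 + 2 ^ p * (B * A), by positivity, fun t ht => ?_⟩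
  have hex : ∃ n : ℕ, t ≤ 2 ^ n := by
    obtain ⟨n, hn⟩ := pow_unbounded_of_one_lt t (one_lt_two)
    exact ⟨n, hn.le⟩
  classical
  refine ⟨Nat.find hex, Nat.find_spec hex, ?_⟩
  have h0 : (F t) ^ 2 ≤ A ^ 2 := by
    rw [← sq_abs]; exact pow_le_pow_left₀ (abs_nonneg _) (hA' t) 2
  rcases hn : Nat.find hex with _ | m
  · simp only [pow_zero, mul_one]
    have : 0 ≤ 2 ^ p * (B * A) := by positivity
    linarith
  · have hm : (2 : ℝ) ^ m < t := by
      have := Nat.find_min hex (m := m) (by omega)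
      exact not_le.mp this
    have h1 : t ^ p * (F t) ^ 2 ≤ B * A := by
      have hb := hB' t
      rw [abs_of_pos ht] at hb
      calc t ^ p * (F t) ^ 2 = (t ^ p * |F t|) * |F t| := by rw [← sq_abs]; ring
        _ ≤ B * A := mul_le_mul hb (hA' t) (abs_nonneg _) hB.le
    have h2 : ((2 : ℝ) ^ m) ^ p * (F t) ^ 2 ≤ B * A := by
      refine le_trans ?_ h1
      gcongr
    have h3 : ((1 / 2 : ℝ) ^ p) ^ (m + 1) * (2 ^ p * ((2 : ℝ) ^ m) ^ p) = 1 := by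
      rw [← mul_pow, ← pow_succ', ← pow_mul, ← pow_mul, mul_comm p, ← mul_pow]
      norm_num
    have h4 : 0 ≤ A ^ 2 * ((1 / 2 : ℝ) ^ p) ^ (m + 1) := by positivity
    calc (F t) ^ 2 = ((1 / 2 : ℝ) ^ p) ^ (m + 1) * 2 ^ p * (((2 : ℝ) ^ m) ^ p * (F t) ^ 2) := by
          linear_combination (-(F t) ^ 2) * h3
      _ ≤ ((1 / 2 : ℝ) ^ p) ^ (m + 1) * 2 ^ p * (B * A) := by gcongr
      _ ≤ _ := by nlinarith

lemma integral_dyadic (F : SchwartzMap ℝ ℝ) (σ : Measure ℝ) (p : ℕ) (K s : ℝ) (hs : 0 < s)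
    (hK0 : 0 < K)
    (hK : ∀ t : ℝ, 0 < t → ∃ n : ℕ, t ≤ 2 ^ n ∧ (F t) ^ 2 ≤ K * ((1 / 2) ^ p) ^ n)
    (hσfin : ∀ r : ℝ, 0 < r → σ (Set.Ioc 0 r) < ⊤)
    (hsum : Summable fun n : ℕ => K * ((1 / 2) ^ p) ^ n * (σ (Set.Ioc 0 (2 ^ n / s))).toReal) :
    IntegrableOn (fun l => (F (s * l)) ^ 2) (Set.Ioi 0) σ ∧
    ∫ l in Set.Ioi (0 : ℝ), (F (s * l)) ^ 2 ∂σ ≤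
      ∑' n : ℕ, K * ((1 / 2) ^ p) ^ n * (σ (Set.Ioc 0 (2 ^ n / s))).toReal := by
  have hcont : Continuous fun l => (F (s * l)) ^ 2 :=
    (F.continuous.comp (continuous_const.mul continuous_id)).pow 2
  have hnn : ∀ n : ℕ, 0 ≤ K * ((1 / 2) ^ p) ^ n * (σ (Set.Ioc 0 (2 ^ n / s))).toReal := by
    intro n; positivity
  have key : ∫⁻ l in Set.Ioi (0 : ℝ), ENNReal.ofReal ((F (s * l)) ^ 2) ∂σ ≤
      ENNReal.ofReal (∑' n : ℕ, K * ((1 / 2) ^ p) ^ n * (σ (Set.Ioc 0 (2 ^ n / s))).toReal) := by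
    calc ∫⁻ l in Set.Ioi (0 : ℝ), ENNReal.ofReal ((F (s * l)) ^ 2) ∂σ
        ≤ ∫⁻ l in Set.Ioi (0 : ℝ), ∑' n : ℕ, (Set.Ioc (0 : ℝ) (2 ^ n / s)).indicator
            (fun _ => ENNReal.ofReal (K * ((1 / 2) ^ p) ^ n)) l ∂σ := by
          refine setLIntegral_mono' measurableSet_Ioi fun l hl => ?_
          have hl : 0 < l := hl
          obtain ⟨n, hn, hF⟩ := hK (s * l) (by positivity)
          refine le_trans ?_ (ENNReal.le_tsum n)
          rw [Set.indicator_of_mem]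
          · exact ENNReal.ofReal_le_ofReal hF
          · exact ⟨hl, by rw [le_div_iff₀ hs]; linarith⟩
      _ ≤ ∫⁻ l, ∑' n : ℕ, (Set.Ioc (0 : ℝ) (2 ^ n / s)).indicator
            (fun _ => ENNReal.ofReal (K * ((1 / 2) ^ p) ^ n)) l ∂σ := setLIntegral_le_lintegral _ _
      _ = ∑' n : ℕ, ENNReal.ofReal (K * ((1 / 2) ^ p) ^ n) * σ (Set.Ioc 0 (2 ^ n / s)) := by
          rw [lintegral_tsum]
          · congr 1; ext n
            rw [lintegral_indicator_const measurableSet_Ioc]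
          · intro n
            exact (measurable_const.indicator measurableSet_Ioc).aemeasurable
      _ = _ := by
          rw [ENNReal.ofReal_tsum_of_nonneg hnn hsum]
          congr 1; ext n
          symm
          rw [ENNReal.ofReal_mul (q := (σ _).toReal) (by positivity), ENNReal.ofReal_toReal (hσfin _ (by positivity)).ne]
  constructor
  · refine ⟨hcont.aestronglyMeasurable, ?_⟩
    rw [hasFiniteIntegral_iff_ofReal (Eventually.of_forall fun l => sq_nonneg _)]
    exact key.trans_lt ENNReal.ofReal_lt_top
  · rw [integral_eq_lintegral_of_nonneg_ae (Eventually.of_forall fun l => sq_nonneg _)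
      hcont.aestronglyMeasurable]
    exact ENNReal.toReal_le_of_le_ofReal (tsum_nonneg hnn) key

/-- Let `α > 0`, `F` an even Schwartz function on `ℝ` not vanishing on
`[-1,1]`, and `σ` a tempered positive Borel measure on `(0,∞)` (finite on bounded sets,
with `σ((0,r]) ≤ C rᴺ` for large `r`). Then `σ((0,ε])/ε^α → 0` as `ε → 0⁺` if and only if
`s^α ∫ F(sλ)² dσ(λ) → 0` as `s → +∞`. -/
theorem stmt10 (α : ℝ) (hα : 0 < α)
    (F : SchwartzMap ℝ ℝ) (hFeven : ∀ t : ℝ, F (-t) = F t)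
    (hFne : ∀ t ∈ Set.Icc (-1 : ℝ) 1, F t ≠ 0)
    (σ : Measure ℝ) (hσsupp : σ (Set.Iic 0) = 0)
    (hσfin : ∀ r : ℝ, 0 < r → σ (Set.Ioc 0 r) < ⊤)
    (hσtemp : ∃ C N M : ℝ, 0 < C ∧ 0 < N ∧ 0 < M ∧
      ∀ r : ℝ, M ≤ r → σ (Set.Ioc 0 r) ≤ ENNReal.ofReal (C * r ^ N)) :
    Tendsto (fun ε : ℝ => (σ (Set.Ioc 0 ε)).toReal / ε ^ α)
        (nhdsWithin 0 (Set.Ioi 0)) (nhds 0) ↔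
      Tendsto (fun s : ℝ => s ^ α * ∫ l in Set.Ioi (0 : ℝ), (F (s * l)) ^ 2 ∂σ)
        atTop (nhds 0) := by
  obtain ⟨C, N, M, hC, hN, hM, hT⟩ := hσtemp
  obtain ⟨p, hp⟩ := exists_nat_ge (α + N + 1)
  obtain ⟨K, hK0, hK⟩ := schwartz_dyadic F p
  set D : ℝ := C * (1 + M) ^ N with hD
  have hD0 : 0 < D := by positivity
  set q : ℝ := 2 ^ N with hq
  have hq0 : 0 < q := by positivity
  set a : ℝ := 2 ^ α with ha
  have ha1 : 1 ≤ a := Real.one_le_rpow (by norm_num) hα.le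
  have hratio : (1 / 2 : ℝ) ^ p * (a * q) ≤ 1 / 2 := by
    have h1 : a * q = 2 ^ (α + N) := by rw [Real.rpow_add (by norm_num)]
    have h2 : a * q * 2 ≤ 2 ^ p := by
      calc a * q * 2 = (2 : ℝ) ^ (α + N + 1) := by
            rw [Real.rpow_add (by norm_num), Real.rpow_one, h1]
        _ ≤ (2 : ℝ) ^ (p : ℝ) := Real.rpow_le_rpow_of_exponent_le (by norm_num) hp
        _ = 2 ^ p := Real.rpow_natCast _ _
    rw [one_div, inv_pow, inv_mul_le_iff₀ (by positivity)]
    linarith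
  -- growth bound
  have hG : ∀ s : ℝ, 1 ≤ s → ∀ n : ℕ, (σ (Set.Ioc 0 (2 ^ n / s))).toReal ≤ D * q ^ n := by
    intro s hs n
    have hs0 : 0 < s := by linarith
    have h2n : (1 : ℝ) ≤ 2 ^ n := one_le_pow₀ (by norm_num)
    have hle : 2 ^ n / s ≤ 2 ^ n * (1 + M) := by
      have : (2 : ℝ) ^ n / s ≤ 2 ^ n := div_le_self (by positivity) hs
      nlinarith
    have hMle : M ≤ 2 ^ n * (1 + M) := by nlinarith
    have h1 : σ (Set.Ioc 0 (2 ^ n / s)) ≤ ENNReal.ofReal (C * (2 ^ n * (1 + M)) ^ N) :=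
      (measure_mono (Set.Ioc_subset_Ioc_right hle)).trans (hT _ hMle)
    have h2 := ENNReal.toReal_le_of_le_ofReal (by positivity) h1
    refine h2.trans (le_of_eq ?_)
    rw [Real.mul_rpow (by positivity) (by positivity), hD, hq, ← Real.rpow_natCast,
      ← Real.rpow_natCast, ← Real.rpow_mul (by norm_num), ← Real.rpow_mul (by norm_num),
      mul_comm (n : ℝ) N]
    ring
  have hsumm : ∀ s : ℝ, 1 ≤ s →
      Summable fun n : ℕ => K * ((1 / 2) ^ p) ^ n * (σ (Set.Ioc 0 (2 ^ n / s))).toReal := by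
    intro s hs
    refine Summable.of_nonneg_of_le (fun n => by positivity) (fun n => ?_)
      ((summable_geometric_of_lt_one (by norm_num : (0 : ℝ) ≤ 1 / 2) (by norm_num)).mul_left
        (K * D))
    calc K * ((1 / 2) ^ p) ^ n * (σ (Set.Ioc 0 (2 ^ n / s))).toReal
        ≤ K * ((1 / 2) ^ p) ^ n * (D * q ^ n) := by gcongr; exact hG s hs n
      _ = K * D * ((1 / 2) ^ p * q) ^ n := by rw [mul_pow]; ring
      _ ≤ K * D * (1 / 2) ^ n := by
        gcongr
        refine le_trans ?_ hratio
        gcongr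
        nlinarith
  have hint := fun s (hs : 1 ≤ s) =>
    integral_dyadic F σ p K s (by linarith) hK0 hK hσfin (hsumm s hs)
  constructor
  · intro h
    have hnear : ∀ᶠ ε in nhdsWithin (0 : ℝ) (Set.Ioi 0),
        (σ (Set.Ioc 0 ε)).toReal / ε ^ α < 1 := h.eventually (gt_mem_nhds one_pos)
    obtain ⟨δ, hδ, hδ'⟩ := mem_nhdsGT_iff_exists_Ioo_subset.mp hnear
    have hδ : 0 < δ := hδ
    have hscale : ∀ s : ℝ, 1 ≤ s → ∀ n : ℕ, s ^ α * (σ (Set.Ioc 0 (2 ^ n / s))).toReal =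
        a ^ n * ((σ (Set.Ioc 0 (2 ^ n / s))).toReal / (2 ^ n / s) ^ α) := by
      intro s hs n
      have hs0 : 0 < s := by linarith
      have hh : ((2 : ℝ) ^ n) ^ α = a ^ n := by
        rw [ha, ← Real.rpow_natCast, ← Real.rpow_natCast, ← Real.rpow_mul (by norm_num),
          ← Real.rpow_mul (by norm_num), mul_comm]
      rw [Real.div_rpow (by positivity) hs0.le, hh]
      have : s ^ α ≠ 0 := by positivity
      have : a ≠ 0 := by positivity
      field_simp
    have hHb : ∀ s : ℝ, 1 ≤ s → ∀ n : ℕ,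
        (σ (Set.Ioc 0 (2 ^ n / s))).toReal / (2 ^ n / s) ^ α ≤ (1 + D / δ ^ α) * q ^ n := by
      intro s hs n
      have hs0 : 0 < s := by linarith
      have hr : (0 : ℝ) < 2 ^ n / s := by positivity
      have hq1 : 1 ≤ q ^ n := one_le_pow₀ (Real.one_le_rpow (by norm_num) hN.le)
      have hd : 0 ≤ D / δ ^ α * q ^ n := by positivity
      rcases lt_or_ge (2 ^ n / s) δ with hlt | hge
      · have : (σ (Set.Ioc 0 (2 ^ n / s))).toReal / (2 ^ n / s) ^ α < 1 := hδ' ⟨hr, hlt⟩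
        linarith
      · calc (σ (Set.Ioc 0 (2 ^ n / s))).toReal / (2 ^ n / s) ^ α
            ≤ (D * q ^ n) / δ ^ α := by
              gcongr
              exact hG s hs n
          _ = D / δ ^ α * q ^ n := by ring
          _ ≤ _ := by linarith
    have hlim : Tendsto (fun s : ℝ => ∑' n : ℕ, s ^ α *
        (K * ((1 / 2) ^ p) ^ n * (σ (Set.Ioc 0 (2 ^ n / s))).toReal)) atTop
        (nhds (∑' _ : ℕ, (0 : ℝ))) := by
      refine tendsto_tsum_of_dominated_convergence
        (bound := fun n => K * (1 + D / δ ^ α) * (1 / 2) ^ n)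
        ((summable_geometric_of_lt_one (by norm_num : (0 : ℝ) ≤ 1 / 2) (by norm_num)).mul_left _)
        ?_ ?_
      · intro n
        have ht : Tendsto (fun s : ℝ => (2 : ℝ) ^ n / s) atTop (nhdsWithin 0 (Set.Ioi 0)) := by
          refine tendsto_nhdsWithin_iff.mpr ⟨tendsto_const_nhds.div_atTop tendsto_id, ?_⟩
          filter_upwards [eventually_gt_atTop 0] with s hs
          exact div_pos (by positivity) hs
        have h2 := (h.comp ht).const_mul (K * ((1 / 2) ^ p) ^ n * a ^ n)
        rw [mul_zero] at h2
        refine h2.congr' ?_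
        filter_upwards [eventually_ge_atTop 1] with s hs
        simp only [Function.comp_apply]
        linear_combination (-K * ((1 / 2) ^ p) ^ n) * hscale s hs n
      · filter_upwards [eventually_ge_atTop 1] with s hs n
        have hs0 : 0 < s := by linarith
        rw [Real.norm_of_nonneg (by positivity)]
        calc s ^ α * (K * ((1 / 2) ^ p) ^ n * (σ (Set.Ioc 0 (2 ^ n / s))).toReal)
            = K * ((1 / 2) ^ p) ^ n * a ^ n *
              ((σ (Set.Ioc 0 (2 ^ n / s))).toReal / (2 ^ n / s) ^ α) := by
              linear_combination (K * ((1 / 2) ^ p) ^ n) * hscale s hs n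
          _ ≤ K * ((1 / 2) ^ p) ^ n * a ^ n * ((1 + D / δ ^ α) * q ^ n) := by
              gcongr; exact hHb s hs n
          _ = K * (1 + D / δ ^ α) * ((1 / 2) ^ p * (a * q)) ^ n := by
              rw [mul_pow, mul_pow]; ring
          _ ≤ _ := by gcongr
    rw [tsum_zero] at hlim
    refine tendsto_of_tendsto_of_tendsto_of_le_of_le' tendsto_const_nhds hlim ?_ ?_
    · filter_upwards [eventually_ge_atTop 1] with s hs
      have hs0 : 0 < s := by linarith
      have : 0 ≤ ∫ l in Set.Ioi (0 : ℝ), (F (s * l)) ^ 2 ∂σ :=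
        integral_nonneg fun l => sq_nonneg _
      positivity
    · filter_upwards [eventually_ge_atTop 1] with s hs
      have hs0 : 0 < s := by linarith
      rw [tsum_mul_left]
      gcongr
      exact (hint s hs).2
  · intro h
    obtain ⟨c, hc, hcF⟩ : ∃ c : ℝ, 0 < c ∧ ∀ t ∈ Set.Icc (-1 : ℝ) 1, c ≤ (F t) ^ 2 := by
      obtain ⟨x, hx, hmin⟩ := isCompact_Icc.exists_isMinOn (s := Set.Icc (-1 : ℝ) 1)
        ⟨0, by norm_num⟩ ((F.continuous.pow 2).continuousOn)
      exact ⟨(F x) ^ 2, by have := hFne x hx; positivity, fun t ht => hmin ht⟩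
    have h2 := (h.comp tendsto_inv_nhdsGT_zero).const_mul c⁻¹
    rw [mul_zero] at h2
    refine tendsto_of_tendsto_of_tendsto_of_le_of_le' tendsto_const_nhds h2 ?_ ?_
    · filter_upwards [self_mem_nhdsWithin] with ε hε
      have hε : 0 < ε := hε
      positivity
    · filter_upwards [Ioo_mem_nhdsGT (one_pos : (0 : ℝ) < 1)] with ε hε
      obtain ⟨hε0, hε1⟩ := hε
      simp only [Function.comp_apply]
      have hs : 1 ≤ ε⁻¹ := (one_le_inv₀ hε0).mpr hε1.le
      have hi := (hint _ hs).1
      have hsub : Set.Ioc 0 ε ⊆ Set.Ioi 0 := fun l hl => hl.1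
      have h3 : c * (σ (Set.Ioc 0 ε)).toReal ≤ ∫ l in Set.Ioi (0 : ℝ), (F (ε⁻¹ * l)) ^ 2 ∂σ := by
        calc c * (σ (Set.Ioc 0 ε)).toReal = ∫ _ in Set.Ioc 0 ε, c ∂σ := by
              rw [setIntegral_const, smul_eq_mul, mul_comm]; rfl
          _ ≤ ∫ l in Set.Ioc 0 ε, (F (ε⁻¹ * l)) ^ 2 ∂σ := by
              refine setIntegral_mono_on (integrableOn_const (hσfin ε hε0).ne) (hi.mono_set hsub)
                measurableSet_Ioc fun l hl => hcF _ ?_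
              have h5 : 0 < ε⁻¹ * l := mul_pos (by positivity) hl.1
              have h6 : ε⁻¹ * l ≤ 1 := by
                rw [inv_mul_le_iff₀ hε0, mul_one]; exact hl.2
              exact ⟨by linarith, h6⟩
          _ ≤ _ := setIntegral_mono_set hi (Eventually.of_forall fun l => sq_nonneg _)
              hsub.eventuallyLE
      rw [Real.inv_rpow hε0.le]
      calc (σ (Set.Ioc 0 ε)).toReal / ε ^ α
          = c⁻¹ * ((ε ^ α)⁻¹ * (c * (σ (Set.Ioc 0 ε)).toReal)) := by field_simp
        _ ≤ _ := by gcongr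
end

section
/- Suppose there are constants $\alpha, \beta > 0$, $\gamma \in (0,1)$, $A, B \ge 0$, $M > 0$, Borel functions $\theta, \psi : [0, \infty) \to [0, \infty)$, and a function $\varepsilon \mapsto r_{\varepsilon}$ from $(0,\infty)$ to $(0,1)$ with $r_{\varepsilon} \to 0$ as $\varepsilon \to 0^+$, satisfying: (i) $\theta$ is nondecreasing, $\theta(r) \le A\varepsilon r^{\alpha}$ for every $\varepsilon > 0$ and every $r \in [0, r_{\varepsilon}^{1-\gamma}]$, and $\theta(r) \le B r^{\beta}$ for all $r \ge M$; (ii) $\int_0^{\infty} r^{\alpha}\psi(r)\, dr < \infty$, $R^{\alpha/\gamma} \int_R^{\infty} \psi(r)\, dr \to 0$ as $R \to \infty$, and $R^{\alpha - \beta}\int_R^{\infty} r^{\beta}\psi(r)\, dr \to 0$ as $R \to \infty$. Then $$r_{\varepsilon}^{-(\alpha+1)} \int_0^{\infty} \psi(r / r_{\varepsilon})\, \theta(r)\, dr \longrightarrow 0 \quad \text{as } \varepsilon \to 0^+.$$ -/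
open MeasureTheory Filter

lemma cov (ρ : ℝ) (hρ : 0 < ρ) (f : ℝ → ENNReal) :
    ∫⁻ s in Set.Ioi (0:ℝ), f s = ENNReal.ofReal ρ * ∫⁻ u in Set.Ioi (0:ℝ), f (ρ * u) := by
  have h := lintegral_image_eq_lintegral_abs_deriv_mul (s := Set.Ioi (0:ℝ)) (f := fun x => ρ * x)
    (f' := fun _ => ρ) measurableSet_Ioi
    (fun x _ => by simpa using ((hasDerivAt_id x).const_mul ρ).hasDerivWithinAt)
    (fun x _ y _ hxy => mul_left_cancel₀ hρ.ne' hxy) f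
  have himg : Set.image (fun x => ρ * x) (Set.Ioi (0:ℝ)) = Set.Ioi 0 := by
    rw [Set.image_mul_left_Ioi hρ]; simp
  rw [himg] at h
  rw [h, abs_of_pos hρ, lintegral_const_mul' _ _ ENNReal.ofReal_ne_top]

/-- pointwise bound, ENNReal -/
lemma ptw (α β γ A B M : ℝ) 
    (hA : 0 ≤ A) (hB : 0 ≤ B) (hM : 0 < M)
    (θ ψ : ℝ → ℝ)
    (hψnn : ∀ r : ℝ, 0 ≤ r → 0 ≤ ψ r)
    (hθmono : MonotoneOn θ (Set.Ici 0)) (ε ρ : ℝ) (hε : 0 < ε) (hρ : 0 < ρ)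
    (hθsmall : ∀ s ∈ Set.Icc (0 : ℝ) (ρ ^ (1 - γ)), θ s ≤ A * ε * s ^ α)
    (hθlarge : ∀ s : ℝ, M ≤ s → θ s ≤ B * s ^ β) (u : ℝ) (hu : 0 < u) :
    ENNReal.ofReal (ρ ^ (-α)) * ENNReal.ofReal (ψ u * θ (ρ * u)) ≤
      ENNReal.ofReal (A * ε) * ENNReal.ofReal (u ^ α * ψ u)
      + ((Set.Ioi (ρ ^ (-γ))).indicator
          (fun u => ENNReal.ofReal (θ M * ρ ^ (-α)) * ENNReal.ofReal (ψ u)) u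
      + (Set.Ioi (M / ρ)).indicator
          (fun u => ENNReal.ofReal (B * ρ ^ (β - α)) * ENNReal.ofReal (u ^ β * ψ u)) u) := by
  have hψ := hψnn u hu.le
  have hρα := Real.rpow_pos_of_pos hρ (-α)
  rw [← ENNReal.ofReal_mul hρα.le]
  by_cases h1 : u ≤ ρ ^ (-γ)
  · refine le_trans ?_ le_self_add
    rw [← ENNReal.ofReal_mul (by positivity)]
    apply ENNReal.ofReal_le_ofReal
    have := hθsmall (ρ * u) ⟨by positivity, by
      rw [sub_eq_add_neg, Real.rpow_add hρ, Real.rpow_one]; gcongr⟩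
    rw [Real.mul_rpow hρ.le hu.le] at this
    have h3 : ρ ^ (-α) * ρ ^ α = 1 := by rw [← Real.rpow_add hρ]; simp
    calc ρ ^ (-α) * (ψ u * θ (ρ * u)) ≤ ρ ^ (-α) * (ψ u * (A * ε * (ρ ^ α * u ^ α))) := by gcongr
      _ = (ρ ^ (-α) * ρ ^ α) * (A * ε * (u ^ α * ψ u)) := by ring
      _ = _ := by rw [h3, one_mul]
  · refine le_trans ?_ le_add_self
    push Not at h1
    by_cases h2 : u ≤ M / ρ
    · refine le_trans ?_ le_self_add
      rw [Set.indicator_of_mem (by exact h1), ← ENNReal.ofReal_mul' hψ]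
      apply ENNReal.ofReal_le_ofReal
      have : θ (ρ * u) ≤ θ M := hθmono (by simp; positivity) (by simpa using hM.le)
        (by rw [le_div_iff₀ hρ] at h2; linarith)
      calc ρ ^ (-α) * (ψ u * θ (ρ * u)) ≤ ρ ^ (-α) * (ψ u * θ M) := by gcongr
        _ = _ := by ring
    · refine le_trans ?_ le_add_self
      push Not at h2
      rw [Set.indicator_of_mem (by exact h2), ← ENNReal.ofReal_mul (by positivity)]
      apply ENNReal.ofReal_le_ofReal
      have := hθlarge (ρ * u) (by rw [div_lt_iff₀ hρ] at h2; linarith)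
      rw [Real.mul_rpow hρ.le hu.le] at this
      calc ρ ^ (-α) * (ψ u * θ (ρ * u)) ≤ ρ ^ (-α) * (ψ u * (B * (ρ ^ β * u ^ β))) := by gcongr
        _ = _ := by rw [sub_eq_add_neg, Real.rpow_add hρ]; ring

/-- Under conditions (i) on the nondecreasing Borel function `θ`
(small near `0` relative to `r_ε^{1-γ}`, polynomially bounded at infinity) and (ii) on the
Borel function `ψ` (integrability of `r^α ψ(r)` and decay of the tails
`R^{α/γ} ∫_R^∞ ψ` and `R^{α-β} ∫_R^∞ r^β ψ`), one has
`r_ε^{-(α+1)} ∫₀^∞ ψ(r/r_ε) θ(r) dr → 0` as `ε → 0⁺`. Integrals of nonnegative functions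
are taken in `[0,∞]`. -/
theorem stmt11 (α β γ A B M : ℝ) (hα : 0 < α) (hβ : 0 < β)
    (hγ : γ ∈ Set.Ioo (0 : ℝ) 1) (hA : 0 ≤ A) (hB : 0 ≤ B) (hM : 0 < M)
    (θ ψ : ℝ → ℝ) (hθmeas : Measurable θ) (hψmeas : Measurable ψ)
    (hθnn : ∀ r : ℝ, 0 ≤ r → 0 ≤ θ r) (hψnn : ∀ r : ℝ, 0 ≤ r → 0 ≤ ψ r)
    (r : ℝ → ℝ) (hr : ∀ ε : ℝ, 0 < ε → r ε ∈ Set.Ioo (0 : ℝ) 1)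
    (hrlim : Tendsto r (nhdsWithin 0 (Set.Ioi 0)) (nhds 0))
    (hθmono : MonotoneOn θ (Set.Ici 0))
    (hθsmall : ∀ ε : ℝ, 0 < ε → ∀ s ∈ Set.Icc (0 : ℝ) (r ε ^ (1 - γ)),
      θ s ≤ A * ε * s ^ α)
    (hθlarge : ∀ s : ℝ, M ≤ s → θ s ≤ B * s ^ β)
    (hψ1 : ∫⁻ s in Set.Ioi (0 : ℝ), ENNReal.ofReal (s ^ α * ψ s) < ⊤)
    (hψ2 : Tendsto (fun R : ℝ =>
        ENNReal.ofReal (R ^ (α / γ)) * ∫⁻ s in Set.Ioi R, ENNReal.ofReal (ψ s))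
      atTop (nhds 0))
    (hψ3 : Tendsto (fun R : ℝ =>
        ENNReal.ofReal (R ^ (α - β)) * ∫⁻ s in Set.Ioi R, ENNReal.ofReal (s ^ β * ψ s))
      atTop (nhds 0)) :
    Tendsto (fun ε : ℝ =>
        ENNReal.ofReal (r ε ^ (-(α + 1))) *
          ∫⁻ s in Set.Ioi (0 : ℝ), ENNReal.ofReal (ψ (s / r ε) * θ s))
      (nhdsWithin 0 (Set.Ioi 0)) (nhds 0) := by
  have hγ0 := hγ.1
  have hrlim' : Tendsto r (nhdsWithin 0 (Set.Ioi 0)) (nhdsWithin 0 (Set.Ioi 0)) :=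
    tendsto_nhdsWithin_iff.2 ⟨hrlim, by
      filter_upwards [self_mem_nhdsWithin] with ε hε using (hr ε hε).1⟩
  have hinv : Tendsto (fun ε => (r ε)⁻¹) (nhdsWithin 0 (Set.Ioi 0)) atTop :=
    tendsto_inv_nhdsGT_zero.comp hrlim'
  have hR3 : Tendsto (fun ε => M / r ε) (nhdsWithin 0 (Set.Ioi 0)) atTop :=
    hinv.const_mul_atTop hM
  have hR2 : Tendsto (fun ε => (r ε) ^ (-γ)) (nhdsWithin 0 (Set.Ioi 0)) atTop := by
    refine ((tendsto_rpow_atTop hγ0).comp hinv).congr' ?_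
    filter_upwards [self_mem_nhdsWithin] with ε hε
    have := (hr ε hε).1
    simp [Real.inv_rpow this.le, Real.rpow_neg this.le]
  have t1 : Tendsto (fun ε : ℝ => ENNReal.ofReal (A * ε) *
      ∫⁻ s in Set.Ioi (0 : ℝ), ENNReal.ofReal (s ^ α * ψ s)) (nhdsWithin 0 (Set.Ioi 0))
      (nhds 0) := by
    have h0 : Tendsto (fun ε : ℝ => ENNReal.ofReal (A * ε)) (nhdsWithin 0 (Set.Ioi 0)) (nhds 0) := by
      have : Tendsto (fun ε : ℝ => ENNReal.ofReal (A * ε)) (nhds 0) (nhds (ENNReal.ofReal (A * 0))) :=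
        (ENNReal.continuous_ofReal.comp (continuous_const.mul continuous_id)).tendsto 0
      simp only [mul_zero, ENNReal.ofReal_zero] at this
      exact this.mono_left nhdsWithin_le_nhds
    simpa using ENNReal.Tendsto.mul_const h0 (Or.inr hψ1.ne)
  have t2 := ENNReal.Tendsto.const_mul (a := ENNReal.ofReal (θ M)) (hψ2.comp hR2)
    (Or.inr ENNReal.ofReal_ne_top)
  have t3 := ENNReal.Tendsto.const_mul (a := ENNReal.ofReal (B * M ^ (β - α))) (hψ3.comp hR3)
    (Or.inr ENNReal.ofReal_ne_top)
  have t := t1.add (t2.add t3)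
  simp only [mul_zero, add_zero] at t
  refine tendsto_of_tendsto_of_tendsto_of_le_of_le' tendsto_const_nhds t
    (Eventually.of_forall fun _ => zero_le) ?_
  filter_upwards [self_mem_nhdsWithin] with ε hε
  have hρ := (hr ε hε).1
  have hs := hθsmall ε hε
  simp only [Function.comp]
  generalize r ε = ρ at hρ hs ⊢
  have hε' : 0 < ε := hε
  have hρα := Real.rpow_pos_of_pos hρ (-α)
  have hθM := hθnn M hM.le
  have e1 : ρ ^ (-(α + 1)) * ρ = ρ ^ (-α) := by
    rw [← Real.rpow_add_one hρ.ne']; congr 1; ring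
  have e2 : (ρ ^ (-γ)) ^ (α / γ) = ρ ^ (-α) := by
    rw [← Real.rpow_mul hρ.le]; congr 1; field_simp
  have e3 : B * M ^ (β - α) * (M / ρ) ^ (α - β) = B * ρ ^ (β - α) := by
    rw [Real.div_rpow hM.le hρ.le, ← neg_sub β α, Real.rpow_neg hM.le, Real.rpow_neg hρ.le]
    have := Real.rpow_pos_of_pos hM (β - α)
    have := Real.rpow_pos_of_pos hρ (β - α)
    field_simp
  rw [cov ρ hρ, ← mul_assoc, ← ENNReal.ofReal_mul (by positivity), e1, ← mul_assoc, ← mul_assoc,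
    ← ENNReal.ofReal_mul hθM, ← ENNReal.ofReal_mul (by positivity), e2, e3,
    ← lintegral_const_mul' _ _ ENNReal.ofReal_ne_top]
  have m1 : Measurable fun u : ℝ => ENNReal.ofReal (u ^ α * ψ u) := by fun_prop
  have m2 : Measurable fun u : ℝ => ENNReal.ofReal (θ M * ρ ^ (-α)) * ENNReal.ofReal (ψ u) := by
    fun_prop
  calc _ ≤ ∫⁻ u in Set.Ioi (0:ℝ), (ENNReal.ofReal (A * ε) * ENNReal.ofReal (u ^ α * ψ u)
      + ((Set.Ioi (ρ ^ (-γ))).indicator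
          (fun u => ENNReal.ofReal (θ M * ρ ^ (-α)) * ENNReal.ofReal (ψ u)) u
      + (Set.Ioi (M / ρ)).indicator
          (fun u => ENNReal.ofReal (B * ρ ^ (β - α)) * ENNReal.ofReal (u ^ β * ψ u)) u)) := by
        refine setLIntegral_mono' measurableSet_Ioi fun u hu => ?_
        rw [mul_div_cancel_left₀ u hρ.ne']
        exact ptw α β γ A B M hA hB hM θ ψ hψnn hθmono ε ρ hε' hρ hs hθlarge u hu
    _ ≤ _ := by
        rw [lintegral_add_left (m1.const_mul _), lintegral_add_left (m2.indicator measurableSet_Ioi),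
          lintegral_const_mul' _ _ ENNReal.ofReal_ne_top,
          ← lintegral_const_mul' (ENNReal.ofReal (θ M * ρ ^ (-α))) _ ENNReal.ofReal_ne_top,
          ← lintegral_const_mul' (ENNReal.ofReal (B * ρ ^ (β - α))) _ ENNReal.ofReal_ne_top,
          ← lintegral_indicator measurableSet_Ioi (fun u => ENNReal.ofReal (θ M * ρ ^ (-α)) * _),
          ← lintegral_indicator measurableSet_Ioi (fun u => ENNReal.ofReal (B * ρ ^ (β - α)) * _)]
        gcongr <;> exact Measure.restrict_le_self
end

section
/- Let $d \ge 1$ and let $\sigma$ be a positive Borel measure on $\mathbb{R}^d$ with $\sigma(\{0\}) = 0$, finite on bounded sets, and tempered in the sense that there exist constants $C, N > 0$ with $\sigma(B_r(0)) \le C(1 + r)^N$ for all $r > 0$, where $B_r(0)$ is the open Euclidean ball of radius $r$ centered at the origin. Then $$\lim_{\varepsilon \to 0^+} \frac{\sigma(B_{\varepsilon}(0))}{\mathrm{Vol}(B_{\varepsilon}(0))} = 0 \quad \Longleftrightarrow \quad \lim_{\tau \to +\infty} \tau^{d/2} \int_{\mathbb{R}^d} e^{-2\tau\|y\|^2}\,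 d\sigma(y) = 0,$$ where $\mathrm{Vol}$ denotes Lebesgue measure on $\mathbb{R}^d$. -/
open MeasureTheory Filter

lemma aux_summable (p : ℕ) : Summable (fun k : ℕ => ((k : ℝ) + 1) ^ p * Real.exp (-(k : ℝ))) := by
  have h := (Real.summable_pow_mul_exp_neg_nat_mul p (r := 1) one_pos)
  have h2 := ((summable_nat_add_iff 1).2 h).mul_left (Real.exp 1)
  refine h2.congr fun k => ?_
  have : Real.exp (-(k : ℝ)) = Real.exp 1 * Real.exp (-1 * ((k + 1 : ℕ) : ℝ)) := by
    rw [← Real.exp_add]; congr 1; push_cast; ring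
  rw [this]; push_cast; ring

lemma aux_bound {d : ℕ} (σ : Measure (EuclideanSpace ℝ (Fin d))) (p q : ℕ) (a b : ℝ)
    (ha : 0 ≤ a) (hb : 0 ≤ b)
    (h : ∀ r : ℝ, 0 < r → σ (Metric.ball 0 r) ≤ ENNReal.ofReal (a * r ^ p + b * r ^ q))
    (s : ℝ) (hs : 0 < s) :
    ∫⁻ y, ENNReal.ofReal (Real.exp (-2 * s ^ 2 * ‖y‖ ^ 2)) ∂σ ≤
      ENNReal.ofReal (a * (s⁻¹) ^ p * (∑' k : ℕ, ((k : ℝ) + 1) ^ p * Real.exp (-(k : ℝ)))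
        + b * (s⁻¹) ^ q * (∑' k : ℕ, ((k : ℝ) + 1) ^ q * Real.exp (-(k : ℝ)))) := by
  have hp := (aux_summable p).mul_left (a * (s⁻¹) ^ p)
  have hq := (aux_summable q).mul_left (b * (s⁻¹) ^ q)
  rw [← tsum_mul_left, ← tsum_mul_left, ← hp.tsum_add hq,
    ENNReal.ofReal_tsum_of_nonneg (fun k => by positivity) (hp.add hq)]
  calc ∫⁻ y, ENNReal.ofReal (Real.exp (-2 * s ^ 2 * ‖y‖ ^ 2)) ∂σ
      ≤ ∫⁻ y, ∑' k : ℕ, (Metric.ball (0 : EuclideanSpace ℝ (Fin d)) (((k : ℝ) + 1) * s⁻¹)).indicator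
          (fun _ => ENNReal.ofReal (Real.exp (-(k : ℝ)))) y ∂σ := by
        refine lintegral_mono fun y => ?_
        refine le_trans ?_ (ENNReal.le_tsum ⌊s * ‖y‖⌋₊)
        have h1 : ((⌊s * ‖y‖⌋₊ : ℕ) : ℝ) ≤ s * ‖y‖ := Nat.floor_le (by positivity)
        have h2 := Nat.lt_floor_add_one (s * ‖y‖)
        rw [Set.indicator_of_mem]
        · apply ENNReal.ofReal_le_ofReal
          apply Real.exp_le_exp.2
          have h3 : ((⌊s * ‖y‖⌋₊ : ℕ) : ℝ) ≤ ((⌊s * ‖y‖⌋₊ : ℕ) : ℝ) ^ 2 := by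
            exact_mod_cast Nat.le_self_pow two_ne_zero _
          have h4 : ((⌊s * ‖y‖⌋₊ : ℕ) : ℝ) ^ 2 ≤ (s * ‖y‖) ^ 2 := by gcongr
          nlinarith [sq_nonneg (s * ‖y‖)]
        · rw [mem_ball_zero_iff, ← div_eq_mul_inv, lt_div_iff₀ hs]
          linarith
    _ = ∑' k : ℕ, ENNReal.ofReal (Real.exp (-(k : ℝ))) * σ (Metric.ball 0 (((k : ℝ) + 1) * s⁻¹)) := by
        rw [lintegral_tsum]
        · congr 1; ext k
          rw [lintegral_indicator_const Metric.isOpen_ball.measurableSet]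
        · intro k
          exact (measurable_const.indicator Metric.isOpen_ball.measurableSet).aemeasurable
    _ ≤ _ := by
        refine ENNReal.tsum_le_tsum fun k => ?_
        refine (mul_le_mul_right (h _ (by positivity)) _).trans ?_
        rw [← ENNReal.ofReal_mul (by positivity)]
        apply ENNReal.ofReal_le_ofReal
        rw [mul_pow, mul_pow]
        apply le_of_eq; ring

theorem stmt12 (d : ℕ) (hd : 1 ≤ d)
    (σ : Measure (EuclideanSpace ℝ (Fin d)))
    (hσ0 : σ {0} = 0)
    (hσfin : ∀ r : ℝ, 0 < r → σ (Metric.ball 0 r) < ⊤)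
    (hσtemp : ∃ C N : ℝ, 0 < C ∧ 0 < N ∧
      ∀ r : ℝ, 0 < r → σ (Metric.ball 0 r) ≤ ENNReal.ofReal (C * (1 + r) ^ N)) :
    Tendsto (fun ε : ℝ =>
        (σ (Metric.ball 0 ε)).toReal /
          (volume (Metric.ball (0 : EuclideanSpace ℝ (Fin d)) ε)).toReal)
        (nhdsWithin 0 (Set.Ioi 0)) (nhds 0) ↔
      Tendsto (fun τ : ℝ => τ ^ ((d : ℝ) / 2) * ∫ y, Real.exp (-2 * τ * ‖y‖ ^ 2) ∂σ)
        atTop (nhds 0) := by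
  obtain ⟨C, N, hC, hN, hT⟩ := hσtemp
  obtain ⟨m, hm⟩ := exists_nat_ge N
  have hm1 : 1 ≤ m := by
    have : (0 : ℝ) < m := hN.trans_le hm
    exact_mod_cast this
  -- natural exponent
  have hT' : ∀ r : ℝ, 0 < r → C * (1 + r) ^ N ≤ C * (1 + r) ^ (d + m) := by
    intro r hr
    rw [← Real.rpow_natCast]
    gcongr
    · linarith
    · push_cast; have : (0 : ℝ) ≤ d := by positivity
      linarith
  set v : ℝ := (volume (Metric.ball (0 : EuclideanSpace ℝ (Fin d)) 1)).toReal with hv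
  have hvpos : 0 < v := ENNReal.toReal_pos (Metric.measure_ball_pos _ _ one_pos).ne'
    measure_ball_lt_top.ne
  have hvol : ∀ r : ℝ, 0 < r →
      (volume (Metric.ball (0 : EuclideanSpace ℝ (Fin d)) r)).toReal = r ^ d * v := by
    intro r hr
    rw [Measure.addHaar_ball_of_pos _ _ hr, ENNReal.toReal_mul, ENNReal.toReal_ofReal (by positivity)]
    simp [hv]
  have hsq : ∀ s : ℝ, 0 < s → (s ^ 2) ^ ((d : ℝ) / 2) = s ^ d := by
    intro s hs
    rw [← Real.rpow_natCast s 2, ← Real.rpow_mul hs.le, ← Real.rpow_natCast s d]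
    congr 1; push_cast; ring
  have hcont : ∀ s : ℝ, Continuous fun y : EuclideanSpace ℝ (Fin d) =>
      Real.exp (-2 * s ^ 2 * ‖y‖ ^ 2) := by intro s; fun_prop
  have hint : ∀ s : ℝ, 0 < s → Integrable (fun y : EuclideanSpace ℝ (Fin d) =>
      Real.exp (-2 * s ^ 2 * ‖y‖ ^ 2)) σ := by
    intro s hs
    refine ⟨(hcont s).aestronglyMeasurable, ?_⟩
    rw [hasFiniteIntegral_iff_ofReal (Eventually.of_forall fun y => (Real.exp_pos _).le)]
    refine (aux_bound σ 0 (d + m) (C * 2 ^ (d + m)) (C * 2 ^ (d + m)) (by positivity)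
      (by positivity) ?_ s hs).trans_lt ENNReal.ofReal_lt_top
    intro r hr
    refine (hT r hr).trans (ENNReal.ofReal_le_ofReal ((hT' r hr).trans ?_))
    rw [mul_assoc, mul_assoc, ← mul_add, ← mul_add]
    refine mul_le_mul_of_nonneg_left ?_ hC.le
    rcases le_total r 1 with h | h
    · calc (1 + r) ^ (d + m) ≤ 2 ^ (d + m) := by gcongr; linarith
        _ ≤ _ := by
          have : 0 ≤ r ^ (d + m) := by positivity
          have h2 : (0 : ℝ) < 2 ^ (d + m) := by positivity
          nlinarith
    · calc (1 + r) ^ (d + m) ≤ (2 * r) ^ (d + m) := by gcongr; linarith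
        _ ≤ _ := by
          rw [mul_pow, pow_zero]
          have h2 : (0 : ℝ) < 2 ^ (d + m) := by positivity
          nlinarith
  constructor
  · intro H
    set A := ∑' k : ℕ, ((k : ℝ) + 1) ^ d * Real.exp (-(k : ℝ)) with hA
    set B := ∑' k : ℕ, ((k : ℝ) + 1) ^ (d + m) * Real.exp (-(k : ℝ)) with hB
    have hA0 : 0 ≤ A := tsum_nonneg fun k => by positivity
    have hB0 : 0 ≤ B := tsum_nonneg fun k => by positivity
    rw [Metric.tendsto_nhds]
    intro e he
    set η := e / (2 * (A + 1)) with hη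
    have hη0 : 0 < η := by positivity
    have hηA : η * A < e / 2 := by
      rw [hη, div_mul_eq_mul_div, div_lt_div_iff₀ (by positivity) (by positivity)]
      nlinarith
    obtain ⟨δ, hδ, hδH⟩ := (Metric.tendsto_nhdsWithin_nhds.1 H) (η / v) (by positivity)
    set b := C * (1 / δ + 1) ^ (d + m) with hb
    have hb0 : 0 ≤ b := by positivity
    have hbd : ∀ r : ℝ, 0 < r →
        σ (Metric.ball 0 r) ≤ ENNReal.ofReal (η * r ^ d + b * r ^ (d + m)) := by
      intro r hr
      rcases lt_or_ge r δ with h | h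
      · have h1 := hδH (x := r) hr (by simpa [abs_of_pos hr] using h)
        rw [hvol r hr, dist_zero_right, Real.norm_of_nonneg (by positivity),
          div_lt_div_iff₀ (by positivity) hvpos] at h1
        rw [← ENNReal.ofReal_toReal (hσfin r hr).ne]
        apply ENNReal.ofReal_le_ofReal
        have h2 : (σ (Metric.ball 0 r)).toReal < η * r ^ d := by
          apply lt_of_mul_lt_mul_right _ hvpos.le
          linarith
        have : 0 ≤ b * r ^ (d + m) := by positivity
        linarith
      · refine (hT r hr).trans (ENNReal.ofReal_le_ofReal ((hT' r hr).trans ?_))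
        have h1 : 1 + r ≤ (1 / δ + 1) * r := by
          have : 1 ≤ r / δ := (one_le_div hδ).2 h
          have h3 : (1 / δ + 1) * r = r / δ + r := by ring
          linarith
        have h2 : C * (1 + r) ^ (d + m) ≤ b * r ^ (d + m) := by
          rw [hb, mul_assoc, ← mul_pow]; gcongr
        have : 0 ≤ η * r ^ d := by positivity
        linarith
    have hlim : Tendsto (fun τ : ℝ => η * A + b * B * (Real.sqrt τ)⁻¹ ^ m) atTop
        (nhds (η * A + b * B * 0 ^ m)) :=
      (((tendsto_inv_atTop_zero.comp Real.tendsto_sqrt_atTop).pow m).const_mul _).const_add _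
    rw [zero_pow (by omega), mul_zero, add_zero] at hlim
    have hlt : η * A < e := by linarith
    filter_upwards [hlim.eventually_lt_const hlt, eventually_gt_atTop 0] with τ hτ hτ0
    set s := Real.sqrt τ with hs
    have hs0 : 0 < s := Real.sqrt_pos.2 hτ0
    have hτs : τ = s ^ 2 := (Real.sq_sqrt hτ0.le).symm
    rw [hτs, hsq s hs0, dist_zero_right]
    have hI0 : 0 ≤ ∫ y, Real.exp (-2 * s ^ 2 * ‖y‖ ^ 2) ∂σ :=
      integral_nonneg fun y => (Real.exp_pos _).le
    rw [Real.norm_of_nonneg (by positivity)]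
    refine lt_of_le_of_lt ?_ hτ
    have hI : ∫ y, Real.exp (-2 * s ^ 2 * ‖y‖ ^ 2) ∂σ ≤
        η * (s⁻¹) ^ d * A + b * (s⁻¹) ^ (d + m) * B := by
      rw [integral_eq_lintegral_of_nonneg_ae (Eventually.of_forall fun y => (Real.exp_pos _).le)
        (hcont s).aestronglyMeasurable]
      exact ENNReal.toReal_le_of_le_ofReal (by positivity)
        (aux_bound σ d (d + m) η b hη0.le hb0 hbd s hs0)
    calc _ ≤ s ^ d * (η * (s⁻¹) ^ d * A + b * (s⁻¹) ^ (d + m) * B) := by gcongr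
      _ = (s * s⁻¹) ^ d * (η * A + b * B * s⁻¹ ^ m) := by rw [mul_pow, pow_add]; ring
      _ = _ := by rw [mul_inv_cancel₀ hs0.ne', one_pow, one_mul]
  · intro H
    have hinv : Tendsto (fun ε : ℝ => (ε⁻¹) ^ 2) (nhdsWithin 0 (Set.Ioi 0)) atTop :=
      (tendsto_pow_atTop two_ne_zero).comp tendsto_inv_nhdsGT_zero
    have H2 := (H.comp hinv).const_mul (Real.exp 2 / v)
    rw [mul_zero] at H2
    refine squeeze_zero' (Eventually.of_forall fun ε => by positivity) ?_ H2
    filter_upwards [self_mem_nhdsWithin] with ε hε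
    have hε : 0 < ε := hε
    have hi : 0 < ε⁻¹ := inv_pos.2 hε
    simp only [Function.comp]
    rw [hsq _ hi, hvol ε hε]
    have hK : Real.exp (-2) * (σ (Metric.ball 0 ε)).toReal ≤
        ∫ y, Real.exp (-2 * ε⁻¹ ^ 2 * ‖y‖ ^ 2) ∂σ := by
      calc Real.exp (-2) * (σ (Metric.ball 0 ε)).toReal
          = ∫ y in Metric.ball 0 ε, Real.exp (-2) ∂σ := by
            rw [setIntegral_const, smul_eq_mul, mul_comm]; rfl
        _ ≤ ∫ y in Metric.ball 0 ε, Real.exp (-2 * ε⁻¹ ^ 2 * ‖y‖ ^ 2) ∂σ := by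
            refine setIntegral_mono_on (integrableOn_const (hσfin ε hε).ne)
              (hint _ hi).integrableOn Metric.isOpen_ball.measurableSet ?_
            intro y hy
            rw [mem_ball_zero_iff] at hy
            apply Real.exp_le_exp.2
            have h1 : ε⁻¹ * ‖y‖ ≤ 1 := by
              rw [inv_mul_le_iff₀ hε]; linarith
            have h2 : (ε⁻¹ * ‖y‖) ^ 2 ≤ 1 := pow_le_one₀ (by positivity) h1
            rw [mul_pow] at h2
            linarith
        _ ≤ _ := setIntegral_le_integral (hint _ hi)
            (Eventually.of_forall fun y => (Real.exp_pos _).le)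
    have h3 : (σ (Metric.ball 0 ε)).toReal ≤
        Real.exp 2 * ∫ y, Real.exp (-2 * ε⁻¹ ^ 2 * ‖y‖ ^ 2) ∂σ := by
      calc (σ (Metric.ball 0 ε)).toReal
          = Real.exp 2 * (Real.exp (-2) * (σ (Metric.ball 0 ε)).toReal) := by
            rw [← mul_assoc, ← Real.exp_add]; norm_num
        _ ≤ _ := by gcongr
    calc _ ≤ (Real.exp 2 * ∫ y, Real.exp (-2 * ε⁻¹ ^ 2 * ‖y‖ ^ 2) ∂σ) / (ε ^ d * v) := by gcongr
      _ = _ := by rw [inv_pow ε d]; field_simp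
end
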